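/- Under the stated hypotheses, if σ and Σ are subordinated with sup σ < inf Σ, then the spectrum of B = A + V does not intersect the open interval (sup σ, inf Σ); i.e. (sup σ, inf Σ) is contained in the resolvent set of B. -/

import Mathlib

/-- `E` is the projection-valued spectral measure of the bounded self-adjoint operator `T`
on the complex Hilbert space `H`: each `E Δ` (for Borel `Δ ⊆ ℝ`) is an orthogonal
projection, `E` is multiplicative and countably additive (in the strong sense), `E ℝ = 1`,
each `E Δ` commutes with `T`, and on the range of `E Δ` the operator `T` has its
approximate point spectrum inside the closure of `Δ` (which uniquely characterizes the
spectral measure of `T`). -/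
structure IsSpectralMeasure {H : Type*} [NormedAddCommGroup H] [InnerProductSpace ℂ H]
    [CompleteSpace H] (T : H →L[ℂ] H) (E : Set ℝ → H →L[ℂ] H) : Prop where
  isSelfAdjoint : ∀ Δ : Set ℝ, MeasurableSet Δ → IsSelfAdjoint (E Δ)
  map_inter : ∀ Δ₁ Δ₂ : Set ℝ, MeasurableSet Δ₁ → MeasurableSet Δ₂ →
    E Δ₁ * E Δ₂ = E (Δ₁ ∩ Δ₂)
  map_univ : E Set.univ = 1
  countably_additive : ∀ Δ : ℕ → Set ℝ, (∀ n, MeasurableSet (Δ n)) →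
    Pairwise (Function.onFun Disjoint Δ) →
    ∀ x : H, HasSum (fun n => E (Δ n) x) (E (⋃ n, Δ n) x)
  commutes : ∀ Δ : Set ℝ, MeasurableSet Δ → Commute T (E Δ)
  spectrum_loc : ∀ Δ : Set ℝ, MeasurableSet Δ → ∀ x : H, E Δ x = x →
    ∀ μ : ℝ, Metric.infDist μ Δ * ‖x‖ ≤ ‖T x - (μ : ℂ) • x‖

/-!
Fix `c` in the gap and let `P` be the spectral projection of `A` for the lower part of the
spectrum. The diagonal blocks of `A + V - c` are those of `A - c`, because `V` is off-diagonal; the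
form of `A + V - c` is therefore `≤ -δ` on the range of `P` and `≥ δ` on its kernel for some
`δ > 0`. Multiplying by the reflection `1 - 2P` cancels the off-diagonal blocks in the real part of
the form, leaving a coercive operator, so `A + V - c` is invertible whatever the size of `V`.

The form bounds come from the part of `A` in a spectral subspace, whose spectrum lies in the
closure of the Borel set. The two projections add up to `1` because the spectral measure vanishes
off the spectrum: for closed `K` disjoint from the spectrum, the part of `A` in the range of `E K`
has empty spectrum, so this range is zero.
-/

open scoped InnerProductSpace

section BlockOperators

variable {𝕜 H : Type*} [RCLike 𝕜] [NormedAddCommGroup H] [InnerProductSpace 𝕜 H] [CompleteSpace H]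

theorem isUnit_iff_exists_antilipschitzWith_of_isSelfAdjoint {T : H →L[𝕜] H}
    (hT : IsSelfAdjoint T) : IsUnit T ↔ ∃ K, AntilipschitzWith K T := by
  constructor
  · rintro ⟨u, rfl⟩
    exact ⟨_, (ContinuousLinearEquiv.unitsEquiv 𝕜 H u).antilipschitz⟩
  · rintro ⟨K, hK⟩
    rw [ContinuousLinearMap.isUnit_iff_bijective,
      ContinuousLinearMap.bijective_iff_dense_range_and_antilipschitz]
    refine ⟨?_, K, hK⟩
    rw [Submodule.topologicalClosure_eq_top_iff, ContinuousLinearMap.orthogonal_range,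
      hT.adjoint_eq, LinearMap.ker_eq_bot]
    exact hK.injective

theorem isUnit_of_le_re_inner {T : H →L[𝕜] H} {δ : ℝ} (hδ : 0 < δ)
    (h : ∀ x, δ * ‖x‖ ^ 2 ≤ RCLike.re ⟪T x, x⟫_𝕜) : IsUnit T :=
  T.isUnit_of_forall_le_norm_inner_map (c := ⟨δ, hδ.le⟩) hδ fun x =>
    (mul_comm _ _).trans_le ((h x).trans (RCLike.re_le_norm _))

theorem norm_sq_eq_add_of_isStarProjection {P : H →L[𝕜] H} (hP : IsStarProjection P) (x : H) :
    ‖x‖ ^ 2 = ‖P x‖ ^ 2 + ‖x - P x‖ ^ 2 := by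
  have hPx : P (x - P x) = 0 := DFunLike.congr_fun hP.mul_one_sub_self x
  have horth : ⟪P x, x - P x⟫_𝕜 = 0 := by
    rw [hP.isSelfAdjoint.isSymmetric.apply_clm, hPx, inner_zero_right]
  simpa only [add_sub_cancel, sq] using
    norm_add_sq_eq_norm_sq_add_norm_sq_of_inner_eq_zero _ _ horth

theorem re_inner_add_sub_of_isSelfAdjoint {T : H →L[𝕜] H} (hT : IsSelfAdjoint T) (x y : H) :
    RCLike.re ⟪T (x + y), y - x⟫_𝕜 = RCLike.re ⟪T y, y⟫_𝕜 - RCLike.re ⟪T x, x⟫_𝕜 := by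
  have hcross : RCLike.re ⟪T x, y⟫_𝕜 = RCLike.re ⟪T y, x⟫_𝕜 := by
    rw [hT.isSymmetric.apply_clm, inner_re_symm]
  simp only [map_add, inner_add_left, inner_sub_right, map_sub, hcross]
  ring

theorem isUnit_of_re_inner_le_of_le_re_inner {T P : H →L[𝕜] H} (hT : IsSelfAdjoint T)
    (hP : IsStarProjection P) {δ : ℝ} (hδ : 0 < δ)
    (hneg : ∀ x, P x = x → RCLike.re ⟪T x, x⟫_𝕜 ≤ -δ * ‖x‖ ^ 2)
    (hpos : ∀ x, P x = 0 → δ * ‖x‖ ^ 2 ≤ RCLike.re ⟪T x, x⟫_𝕜) : IsUnit T := by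
  -- The reflection `J = (1 - P) - P` flips the sign of the negative block, so `J * T` is coercive.
  set J : H →L[𝕜] H := 1 - P - P with hJ
  have hJsa : IsSelfAdjoint J := hP.one_sub.isSelfAdjoint.sub hP.isSelfAdjoint
  have hJJ : J * J = 1 := by
    have hPP : P * P = P := hP.isIdempotentElem
    simp only [hJ, sub_mul, mul_sub, one_mul, mul_one, hPP]
    abel
  have hJunit : IsUnit J := ⟨⟨J, J, hJJ, hJJ⟩, rfl⟩
  have hJT : IsUnit (J * T) := by
    refine isUnit_of_le_re_inner hδ fun x => ?_
    have hPPx : P (P x) = P x := DFunLike.congr_fun hP.isIdempotentElem x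
    have hPQx : P (x - P x) = 0 := DFunLike.congr_fun hP.mul_one_sub_self x
    calc δ * ‖x‖ ^ 2
        = δ * ‖x - P x‖ ^ 2 - -δ * ‖P x‖ ^ 2 := by
          rw [norm_sq_eq_add_of_isStarProjection hP x]; ring
      _ ≤ RCLike.re ⟪T (x - P x), x - P x⟫_𝕜 - RCLike.re ⟪T (P x), P x⟫_𝕜 :=
          sub_le_sub (hpos _ hPQx) (hneg _ hPPx)
      _ = RCLike.re ⟪T x, J x⟫_𝕜 := by
          rw [← re_inner_add_sub_of_isSelfAdjoint hT, add_sub_cancel]; rfl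
      _ = RCLike.re ⟪(J * T) x, x⟫_𝕜 := congrArg _ (hJsa.isSymmetric (T x) x).symm
  simpa only [← mul_assoc, hJJ, one_mul] using hJunit.mul hJT

theorem inner_apply_self_eq_zero_of_mul_mul_eq_zero {P V : H →L[𝕜] H} (hP : IsSelfAdjoint P)
    (hPVP : P * V * P = 0) {x : H} (hx : P x = x) : ⟪V x, x⟫_𝕜 = 0 := by
  have hPVx : P (V (P x)) = 0 := DFunLike.congr_fun hPVP x
  calc ⟪V x, x⟫_𝕜 = ⟪V (P x), P x⟫_𝕜 := by rw [hx]
    _ = ⟪P (V (P x)), x⟫_𝕜 := (hP.isSymmetric _ x).symm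
    _ = 0 := by rw [hPVx, inner_zero_left]

end BlockOperators

section RealSpectrum

variable {H : Type*} [NormedAddCommGroup H] [InnerProductSpace ℂ H]

theorem algebraMap_real_apply_eq_smul (μ : ℝ) (x : H) :
    algebraMap ℝ (H →L[ℂ] H) μ x = μ • x := by
  rw [Algebra.algebraMap_eq_smul_one, smul_apply, one_apply_eq_self]

theorem re_inner_algebraMap_real_apply_self (μ : ℝ) (x : H) :
    RCLike.re ⟪algebraMap ℝ (H →L[ℂ] H) μ x, x⟫_ℂ = μ * ‖x‖ ^ 2 := by
  rw [algebraMap_real_apply_eq_smul, ← Complex.coe_smul, inner_smul_left, Complex.conj_ofReal,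
    ← inner_self_eq_norm_sq (𝕜 := ℂ)]
  exact Complex.re_ofReal_mul _ _

variable [CompleteSpace H]

theorem notMem_spectrum_iff_exists_antilipschitzWith {T : H →L[ℂ] H} (hT : IsSelfAdjoint T)
    {μ : ℝ} : μ ∉ spectrum ℝ T ↔ ∃ K, AntilipschitzWith K (T - algebraMap ℝ (H →L[ℂ] H) μ) := by
  rw [spectrum.notMem_iff, IsUnit.sub_iff]
  exact isUnit_iff_exists_antilipschitzWith_of_isSelfAdjoint (hT.sub (.algebraMap _ (.all μ)))

theorem re_inner_le_of_spectrum_subset_Iic {T : H →L[ℂ] H} (hT : IsSelfAdjoint T) {r : ℝ}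
    (h : spectrum ℝ T ⊆ Set.Iic r) (x : H) : RCLike.re ⟪T x, x⟫_ℂ ≤ r * ‖x‖ ^ 2 := by
  have hle : T ≤ algebraMap ℝ (H →L[ℂ] H) r := le_algebraMap_of_spectrum_le h hT
  have hform := (ContinuousLinearMap.le_def _ _ |>.mp hle).re_inner_nonneg_left x
  rwa [sub_apply, inner_sub_left, map_sub, sub_nonneg, re_inner_algebraMap_real_apply_self]
    at hform

theorem le_re_inner_of_spectrum_subset_Ici {T : H →L[ℂ] H} (hT : IsSelfAdjoint T) {r : ℝ}
    (h : spectrum ℝ T ⊆ Set.Ici r) (x : H) : r * ‖x‖ ^ 2 ≤ RCLike.re ⟪T x, x⟫_ℂ := by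
  have hle : algebraMap ℝ (H →L[ℂ] H) r ≤ T := algebraMap_le_of_le_spectrum h hT
  have hform := (ContinuousLinearMap.le_def _ _ |>.mp hle).re_inner_nonneg_left x
  rwa [sub_apply, inner_sub_left, map_sub, sub_nonneg, re_inner_algebraMap_real_apply_self]
    at hform

theorem subsingleton_of_spectrum_eq_empty {T : H →L[ℂ] H} (hT : IsSelfAdjoint T)
    (h : spectrum ℝ T = ∅) : Subsingleton H := by
  by_contra! hnt
  exact (ContinuousFunctionalCalculus.spectrum_nonempty T hT).ne_empty h

theorem isSelfAdjoint_restrict {T : H →L[ℂ] H} (hT : IsSelfAdjoint T) {S : Submodule ℂ H}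
    [CompleteSpace S] (hS : ∀ x ∈ S, T x ∈ S) : IsSelfAdjoint (T.restrict hS) :=
  ContinuousLinearMap.isSelfAdjoint_iff_isSymmetric.mpr (hT.isSymmetric.restrict_invariant hS)

theorem spectrum_restrict_subset {T : H →L[ℂ] H} (hT : IsSelfAdjoint T) {S : Submodule ℂ H}
    [CompleteSpace S] (hS : ∀ x ∈ S, T x ∈ S) :
    spectrum ℝ (T.restrict hS) ⊆ spectrum ℝ T := by
  intro μ hμ
  contrapose! hμ
  obtain ⟨K, hK⟩ := (notMem_spectrum_iff_exists_antilipschitzWith hT).mp hμ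
  exact (notMem_spectrum_iff_exists_antilipschitzWith (isSelfAdjoint_restrict hT hS)).mpr
    ⟨K, fun x y => hK x y⟩

end RealSpectrum

/-- The range of the spectral projection `E Δ`, encoded as its set of fixed points: this makes
completeness automatic and matches the form in which `IsSpectralMeasure.spectrum_loc` is stated. -/
abbrev spectralSubspace {H : Type*} [NormedAddCommGroup H] [InnerProductSpace ℂ H]
    (E : Set ℝ → H →L[ℂ] H) (Δ : Set ℝ) : Submodule ℂ H :=
  (E Δ).toLinearMap.eqLocus (1 : H →L[ℂ] H).toLinearMap

namespace IsSpectralMeasure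

variable {H : Type*} [NormedAddCommGroup H] [InnerProductSpace ℂ H] [CompleteSpace H]
  {T : H →L[ℂ] H} {E : Set ℝ → H →L[ℂ] H} {Δ : Set ℝ}

theorem isStarProjection (hE : IsSpectralMeasure T E) (hΔ : MeasurableSet Δ) :
    IsStarProjection (E Δ) where
  isIdempotentElem := by rw [IsIdempotentElem, hE.map_inter Δ Δ hΔ hΔ, Set.inter_self]
  isSelfAdjoint := hE.isSelfAdjoint Δ hΔ

theorem map_empty (hE : IsSpectralMeasure T E) : E ∅ = 0 := by
  ext x
  have h := hE.countably_additive (fun _ => ∅) (fun _ => .empty) (fun _ _ _ => disjoint_bot_left) x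
  simpa using tendsto_nhds_unique tendsto_const_nhds h.summable.tendsto_atTop_zero

open Classical in
/-- The `H`-valued measure `Δ ↦ E Δ x`, which gives access to finite additivity. It is set to `0`
on non-measurable sets, as Mathlib's vector measures are required to be, whereas `E` is
unconstrained there. -/
noncomputable def vectorMeasure (hE : IsSpectralMeasure T E) (x : H) :
    MeasureTheory.VectorMeasure ℝ H where
  measureOf' Δ := if MeasurableSet Δ then E Δ x else 0
  empty' := by simp [hE.map_empty]
  not_measurable' _ hΔ := if_neg hΔ
  m_iUnion' Δ hΔ hd := by
    simpa only [hΔ, MeasurableSet.iUnion hΔ, if_true] using hE.countably_additive Δ hΔ hd x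

theorem vectorMeasure_apply (hE : IsSpectralMeasure T E) (hΔ : MeasurableSet Δ) (x : H) :
    hE.vectorMeasure x Δ = E Δ x :=
  if_pos hΔ

theorem map_union (hE : IsSpectralMeasure T E) {s t : Set ℝ} (hs : MeasurableSet s)
    (ht : MeasurableSet t) (hst : Disjoint s t) : E (s ∪ t) = E s + E t := by
  ext x
  rw [add_apply, ← hE.vectorMeasure_apply (hs.union ht), ← hE.vectorMeasure_apply hs,
    ← hE.vectorMeasure_apply ht]
  exact (hE.vectorMeasure x).of_union hst hs ht

theorem map_eq_zero_of_subset (hE : IsSpectralMeasure T E) {s t : Set ℝ} (hs : MeasurableSet s)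
    (ht : MeasurableSet t) (hst : s ⊆ t) (h : E t = 0) : E s = 0 := by
  rw [← Set.inter_eq_left.mpr hst, ← hE.map_inter s t hs ht, h, mul_zero]

theorem map_iUnion_eq_zero (hE : IsSpectralMeasure T E) {s : ℕ → Set ℝ}
    (hs : ∀ n, MeasurableSet (s n)) (h : ∀ n, E (s n) = 0) : E (⋃ n, s n) = 0 := by
  have hd (n : ℕ) : MeasurableSet (disjointed s n) := .disjointed hs n
  have hzero (n : ℕ) : E (disjointed s n) = 0 :=
    hE.map_eq_zero_of_subset (hd n) (hs n) (disjointed_le s n) (h n)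
  ext x
  have hsum := hE.countably_additive (disjointed s) hd (disjoint_disjointed s) x
  simp only [hzero, zero_apply, iUnion_disjointed] at hsum
  exact hsum.unique hasSum_zero

/-- The part of `T` in the spectral subspace of `Δ`, as an operator on that Hilbert space, so that
its spectrum localizes `T` to `Δ`. -/
noncomputable def part (hE : IsSpectralMeasure T E) (hΔ : MeasurableSet Δ) :
    spectralSubspace E Δ →L[ℂ] spectralSubspace E Δ :=
  T.restrict fun x (hx : E Δ x = x) => show E Δ (T x) = T x by
    conv_rhs => rw [← hx]
    exact (DFunLike.congr_fun (hE.commutes Δ hΔ) x).symm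

theorem isSelfAdjoint_part (hE : IsSpectralMeasure T E) (hT : IsSelfAdjoint T)
    (hΔ : MeasurableSet Δ) : IsSelfAdjoint (hE.part hΔ) :=
  isSelfAdjoint_restrict hT _

theorem spectrum_part_subset_spectrum (hE : IsSpectralMeasure T E) (hT : IsSelfAdjoint T)
    (hΔ : MeasurableSet Δ) : spectrum ℝ (hE.part hΔ) ⊆ spectrum ℝ T :=
  spectrum_restrict_subset hT _

theorem spectrum_part_subset_closure (hE : IsSpectralMeasure T E) (hT : IsSelfAdjoint T)
    (hΔ : MeasurableSet Δ) : spectrum ℝ (hE.part hΔ) ⊆ closure Δ := by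
  intro μ hμ
  contrapose! hμ
  refine (notMem_spectrum_iff_exists_antilipschitzWith (hE.isSelfAdjoint_part hT hΔ)).mpr ?_
  rcases Δ.eq_empty_or_nonempty with rfl | hne
  · -- The junk value `Metric.infDist μ ∅ = 0` makes `spectrum_loc` void, but `E ∅ = 0`.
    have hzero (x : spectralSubspace E ∅) : x = 0 :=
      Subtype.ext (x.2.symm.trans (DFunLike.congr_fun hE.map_empty (x : H)))
    have : Subsingleton (spectralSubspace E ∅) := ⟨fun x y => (hzero x).trans (hzero y).symm⟩
    exact ⟨0, .of_subsingleton⟩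
  · have hpos : 0 < Metric.infDist μ Δ := (Metric.infDist_pos_iff_notMem_closure hne).mp hμ
    refine ⟨⟨(Metric.infDist μ Δ)⁻¹, inv_nonneg.mpr hpos.le⟩,
      ContinuousLinearMap.antilipschitz_of_bound _ fun x => ?_⟩
    have hloc := hE.spectrum_loc Δ hΔ x x.2 μ
    rw [Complex.coe_smul] at hloc
    rw [sub_apply, algebraMap_real_apply_eq_smul]
    exact (le_inv_mul_iff₀ hpos).mpr hloc

theorem map_eq_zero_of_isClosed_of_disjoint_spectrum (hE : IsSpectralMeasure T E)
    (hT : IsSelfAdjoint T) (hΔ : IsClosed Δ) (hd : Disjoint Δ (spectrum ℝ T)) : E Δ = 0 := by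
  have hspec : spectrum ℝ (hE.part hΔ.measurableSet) = ∅ :=
    Set.subset_empty_iff.mp <| hd
      ((hE.spectrum_part_subset_closure hT hΔ.measurableSet).trans hΔ.closure_subset)
      (hE.spectrum_part_subset_spectrum hT hΔ.measurableSet)
  have hsub : Subsingleton (spectralSubspace E Δ) :=
    subsingleton_of_spectrum_eq_empty (hE.isSelfAdjoint_part hT hΔ.measurableSet) hspec
  ext x
  have hx : E Δ (E Δ x) = E Δ x :=
    DFunLike.congr_fun (hE.isStarProjection hΔ.measurableSet).isIdempotentElem x
  exact congrArg Subtype.val (Subsingleton.elim (⟨E Δ x, hx⟩ : spectralSubspace E Δ) 0)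

theorem map_compl_spectrum (hE : IsSpectralMeasure T E) (hT : IsSelfAdjoint T) :
    E (spectrum ℝ T)ᶜ = 0 := by
  have hopen : IsOpen (spectrum ℝ T)ᶜ := (spectrum.isClosed T).isOpen_compl
  obtain ⟨K, hKc, hKs, hKu, -⟩ := hopen.exists_iUnion_isClosed
  rw [← hKu]
  exact hE.map_iUnion_eq_zero (fun n => (hKc n).measurableSet) fun n =>
    hE.map_eq_zero_of_isClosed_of_disjoint_spectrum hT (hKc n)
      (Set.disjoint_left.mpr fun _ hx => hKs n hx)

theorem map_eq_one_of_spectrum_subset (hE : IsSpectralMeasure T E) (hT : IsSelfAdjoint T)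
    (hΔ : MeasurableSet Δ) (h : spectrum ℝ T ⊆ Δ) : E Δ = 1 := by
  have hcompl : E Δᶜ = 0 :=
    hE.map_eq_zero_of_subset hΔ.compl (spectrum.isClosed T).measurableSet.compl
      (Set.compl_subset_compl.mpr h) (hE.map_compl_spectrum hT)
  rw [← hE.map_univ, ← Set.union_compl_self Δ, hE.map_union hΔ hΔ.compl disjoint_compl_right,
    hcompl, add_zero]

theorem re_inner_le_of_subset_Iic (hE : IsSpectralMeasure T E) (hT : IsSelfAdjoint T)
    (hΔ : MeasurableSet Δ) {r : ℝ} (hr : Δ ⊆ Set.Iic r) {x : H} (hx : E Δ x = x) :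
    RCLike.re ⟪T x, x⟫_ℂ ≤ r * ‖x‖ ^ 2 :=
  re_inner_le_of_spectrum_subset_Iic (hE.isSelfAdjoint_part hT hΔ)
    ((hE.spectrum_part_subset_closure hT hΔ).trans (closure_minimal hr isClosed_Iic))
    (⟨x, hx⟩ : spectralSubspace E Δ)

theorem le_re_inner_of_subset_Ici (hE : IsSpectralMeasure T E) (hT : IsSelfAdjoint T)
    (hΔ : MeasurableSet Δ) {r : ℝ} (hr : Δ ⊆ Set.Ici r) {x : H} (hx : E Δ x = x) :
    r * ‖x‖ ^ 2 ≤ RCLike.re ⟪T x, x⟫_ℂ :=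
  le_re_inner_of_spectrum_subset_Ici (hE.isSelfAdjoint_part hT hΔ)
    ((hE.spectrum_part_subset_closure hT hΔ).trans (closure_minimal hr isClosed_Ici))
    (⟨x, hx⟩ : spectralSubspace E Δ)

end IsSpectralMeasure

section SubordinatedSpectra

variable {H : Type*} [NormedAddCommGroup H] [InnerProductSpace ℂ H] [CompleteSpace H]

theorem re_inner_add_sub_algebraMap_of_offDiagonal {P V : H →L[ℂ] H} (hP : IsSelfAdjoint P)
    (hPVP : P * V * P = 0) {x : H} (hx : P x = x) (A : H →L[ℂ] H) (c : ℝ) :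
    RCLike.re ⟪(A + V - algebraMap ℝ (H →L[ℂ] H) c) x, x⟫_ℂ =
      RCLike.re ⟪A x, x⟫_ℂ - c * ‖x‖ ^ 2 := by
  rw [sub_apply, add_apply, inner_sub_left, inner_add_left,
    inner_apply_self_eq_zero_of_mul_mul_eq_zero hP hPVP hx, add_zero, map_sub,
    re_inner_algebraMap_real_apply_self]

theorem gap_survives_subordinated_case_general {A V : H →L[ℂ] H} (hA : IsSelfAdjoint A)
    (hV : IsSelfAdjoint V) {EA : Set ℝ → H →L[ℂ] H} (hEA : IsSpectralMeasure A EA)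
    {σ Sig : Set ℝ} (hσ : MeasurableSet σ) (hSig : MeasurableSet Sig)
    (hspec : spectrum ℝ A ⊆ σ ∪ Sig)
    (hoff₁ : EA σ * V * EA σ = 0) (hoff₂ : EA Sig * V * EA Sig = 0)
    {a b : ℝ} (hσa : σ ⊆ Set.Iic a) (hSigb : Sig ⊆ Set.Ici b) :
    Disjoint (Set.Ioo a b) (spectrum ℝ (A + V)) := by
  refine Set.disjoint_left.mpr fun c ⟨hac, hcb⟩ => ?_
  rw [spectrum.notMem_iff, IsUnit.sub_iff]
  have hdisj : Disjoint σ Sig :=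
    (Set.Iic_disjoint_Ici.mpr (hac.trans hcb).not_ge).mono hσa hSigb
  have hsum : EA σ + EA Sig = 1 := by
    rw [← hEA.map_union hσ hSig hdisj, hEA.map_eq_one_of_spectrum_subset hA (hσ.union hSig) hspec]
  refine isUnit_of_re_inner_le_of_le_re_inner ((hA.add hV).sub (.algebraMap _ (.all c)))
    (hEA.isStarProjection hσ) (lt_min (sub_pos.mpr hac) (sub_pos.mpr hcb))
    (fun x hx => ?_) (fun x hx => ?_)
  · have hform := hEA.re_inner_le_of_subset_Iic hA hσ hσa hx
    have hmin := mul_le_mul_of_nonneg_right (min_le_left (c - a) (b - c)) (sq_nonneg ‖x‖)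
    rw [re_inner_add_sub_algebraMap_of_offDiagonal (hEA.isSelfAdjoint σ hσ) hoff₁ hx]
    linarith
  · replace hx : EA Sig x = x := by
      simpa only [add_apply, hx, zero_add, one_apply_eq_self] using DFunLike.congr_fun hsum x
    have hform := hEA.le_re_inner_of_subset_Ici hA hSig hSigb hx
    have hmin := mul_le_mul_of_nonneg_right (min_le_right (c - a) (b - c)) (sq_nonneg ‖x‖)
    rw [re_inner_add_sub_algebraMap_of_offDiagonal (hEA.isSelfAdjoint Sig hSig) hoff₂ hx]
    linarith

end SubordinatedSpectra

/-- **Theorem C (i).** If the isolated parts `σ` and `Σ` of the spectrum of `A` are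
subordinated, `sup σ < inf Σ`, and the perturbation `V` is off-diagonal, then the spectrum
of `B = A + V` does not intersect the open interval `(sup σ, inf Σ)`. -/
theorem gap_survives_subordinated_case
    {H : Type*} [NormedAddCommGroup H] [InnerProductSpace ℂ H] [CompleteSpace H]
    [TopologicalSpace.SeparableSpace H]
    (A V B : H →L[ℂ] H) (hA : IsSelfAdjoint A) (hV : IsSelfAdjoint V) (hB : B = A + V)
    (σ Sig : Set ℝ) (hσc : IsClosed σ) (hSigc : IsClosed Sig) (hdisj : Disjoint σ Sig)
    (hspec : spectrum ℝ A = σ ∪ Sig)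
    (d : ℝ) (hd : d = sInf (Set.image2 dist σ Sig)) (hd0 : 0 < d)
    (EA : Set ℝ → H →L[ℂ] H) (hEA : IsSpectralMeasure A EA)
    (hoff₁ : EA σ * V * EA σ = 0) (hoff₂ : EA Sig * V * EA Sig = 0)
    (hsub : sSup σ < sInf Sig) :
    ∀ x ∈ Set.Ioo (sSup σ) (sInf Sig), x ∉ spectrum ℝ B := by
  have hcomp : IsCompact (σ ∪ Sig) := hspec ▸ spectrum.isCompact A
  exact fun x hx => hB ▸ Set.disjoint_left.mp (gap_survives_subordinated_case_general hA hV hEA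
    hσc.measurableSet hSigc.measurableSet hspec.subset hoff₁ hoff₂
    (fun _ hs => le_csSup (hcomp.bddAbove.mono Set.subset_union_left) hs)
    (fun _ ht => csInf_le (hcomp.bddBelow.mono Set.subset_union_right) ht)) hx
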